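/- arXiv:1203.5139 — 3 statements merged into one kernel-verified Lean document; each statement's English description precedes it below -/
import Mathlib

section
/- Let M be a connected metric space containing at least two points. Then the identity map on M does not have the weak shadowing property. -/
/-!
In a connected metric space any two points `a`, `b` are joined by a chain of jumps shorter than `δ`,
however small `δ` is: the set of points that such chains reach from `a` is clopen
(`exists_pseudoOrbit_through`). Such a chain, made constant beyond its ends, is a
pseudo-orbit of the identity through both `a` and `b`. An orbit of the identity is a single point,
and no point has distance less than `dist a b / 2` from both.
-/

/-- A `δ`-pseudo-orbit of `f`: a bi-infinite sequence with jumps less than `δ`. -/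
def IsPseudoOrbit {M : Type*} [MetricSpace M] (f : M → M) (δ : ℝ) (x : ℤ → M) : Prop :=
  ∀ i : ℤ, dist (f (x i)) (x (i + 1)) < δ

/-- The weak shadowing property for a bijection `f` of a metric space:
for every `ε > 0` there is `δ > 0` such that every `δ`-pseudo-orbit is contained in
the `ε`-neighborhood of some full orbit `{f^j p : j ∈ ℤ}`. -/
def WeakShadowing {M : Type*} [MetricSpace M] (f : Equiv.Perm M) : Prop :=
  ∀ ε > 0, ∃ δ > 0, ∀ x : ℤ → M, IsPseudoOrbit (⇑f) δ x →
    ∃ p : M, ∀ i : ℤ, ∃ j : ℤ, dist (x i) ((f ^ j) p) < ε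

/-- Chain-connectedness: every two points lie on a common `δ`-pseudo-orbit of the identity. -/
theorem exists_pseudoOrbit_through {M : Type*} [MetricSpace M] [ConnectedSpace M]
    {δ : ℝ} (hδ : 0 < δ) (a b : M) :
    ∃ x : ℤ → M, IsPseudoOrbit (⇑(Equiv.refl M)) δ x ∧ (∃ i, x i = a) ∧ ∃ n, x n = b := by
  -- The condition `i ≤ n` ensures that `a` survives when the sequence is changed after time `n`.
  let S : Set M := {c | ∃ x : ℤ → M, IsPseudoOrbit (⇑(Equiv.refl M)) δ x ∧
    ∃ n, (∃ i ≤ n, x i = a) ∧ x n = c}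
  have step : ∀ c d, dist c d < δ → c ∈ S → d ∈ S := by
    rintro c d hcd ⟨x, hx, n, ⟨i, hin, hi⟩, rfl⟩
    refine ⟨fun k => if k ≤ n then x k else d, fun k => ?_, n + 1, ⟨i, by lia, ?_⟩, ?_⟩
    · have hxk := hx k
      simp only [Equiv.refl_apply] at hxk ⊢
      rcases lt_trichotomy k n with hk | rfl | hk
      · rwa [if_pos hk.le, if_pos (by lia)]
      · rwa [if_pos le_rfl, if_neg (by lia)]
      · rwa [if_neg (by lia), if_neg (by lia), dist_self]
    · simp only [if_pos hin, hi]
    · exact if_neg (by lia)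
  have hopen : IsOpen S := Metric.isOpen_iff.2 fun c hc =>
    ⟨δ, hδ, fun d hd => step c d (by rwa [dist_comm]) hc⟩
  have hclosed : IsClosed S := ⟨Metric.isOpen_iff.2 fun c hc =>
    ⟨δ, hδ, fun d hd hdS => hc (step d c hd hdS)⟩⟩
  have ha : a ∈ S := ⟨fun _ => a, fun _ => by simpa using hδ, 0, ⟨0, le_rfl, rfl⟩, rfl⟩
  have hb : b ∈ S := by
    rw [IsClopen.eq_univ ⟨hclosed, hopen⟩ ⟨a, ha⟩]
    trivial
  obtain ⟨x, hx, n, ⟨i, -, hi⟩, hn⟩ := hb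
  exact ⟨x, hx, ⟨i, hi⟩, n, hn⟩

/-- On a connected metric space with at least two points, the identity map does not
have the weak shadowing property. -/
theorem not_weakShadowing_id {M : Type*} [MetricSpace M] [ConnectedSpace M]
    (h : ∃ a b : M, a ≠ b) :
    ¬ WeakShadowing (Equiv.refl M) := by
  obtain ⟨a, b, hab⟩ := h
  intro hW
  obtain ⟨δ, hδ, hx⟩ := hW (dist a b / 2) (half_pos (dist_pos.2 hab))
  obtain ⟨x, hpo, ⟨i, rfl⟩, n, rfl⟩ := exists_pseudoOrbit_through hδ a b
  obtain ⟨p, hp⟩ := hx x hpo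
  have hfix : ∀ k : ℤ, dist (x k) p < dist (x i) (x n) / 2 := by
    intro k
    obtain ⟨j, hj⟩ := hp k
    have hone : (Equiv.refl M : Equiv.Perm M) ^ j = 1 := one_zpow j
    rwa [hone, Equiv.Perm.one_apply] at hj
  linarith [hfix i, hfix n, dist_triangle_right (x i) (x n) p]
end

section
/- Let M be a compact connected metric space with more than one point, and let f : M → M be a homeomorphism such that f^κ is the identity map for some positive integer κ. Then f does not have the weak shadowing property. -/
/-- In a connected metric space any two points are joined by a finite chain of steps shorter
than `δ`. -/
lemma reflTransGen_dist_lt {M : Type*} [MetricSpace M] [ConnectedSpace M] {δ : ℝ} (hδ : 0 < δ)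
    (b c : M) : Relation.ReflTransGen (fun u v : M => dist u v < δ) b c := by
  refine PreconnectedSpace.induction₂' _ (fun u => ?_) ⟨fun _ _ _ h₁ h₂ => h₁.trans h₂⟩ b c
  filter_upwards [Metric.ball_mem_nhds u hδ] with v hv
  exact ⟨.single (by rwa [dist_comm]), .single hv⟩

/-- A sequence with jumps less than `δ` that visits `a i` for every `i < N`. The endpoint `y L = c` is
arbitrary so that the sequence can be extended inductively to reach the next target. -/
lemma exists_chain_visiting {M : Type*} [MetricSpace M] [ConnectedSpace M] {δ : ℝ} (hδ : 0 < δ)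
    (a : ℕ → M) (N : ℕ) (c : M) : ∃ (y : ℕ → M) (L : ℕ), y L = c ∧
      (∀ n, dist (y n) (y (n + 1)) < δ) ∧ ∀ i < N, ∃ n ≤ L, y n = a i := by
  induction N generalizing c with
  | zero => exact ⟨fun _ => c, 0, rfl, by simpa using hδ, by simp⟩
  | succ N ih =>
    induction reflTransGen_dist_lt hδ (a N) c with
    | refl =>
      obtain ⟨y, L, hL, hy, hv⟩ := ih (a N)
      refine ⟨y, L, hL, hy, fun i hi => ?_⟩
      rcases Nat.lt_succ_iff_lt_or_eq.1 hi with h | rfl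
      · exact hv i h
      · exact ⟨L, le_rfl, hL⟩
    | @tail d e _ hde ih' =>
      obtain ⟨y, L, hL, hy, hv⟩ := ih'
      refine ⟨fun n => if n ≤ L then y n else e, L + 1, by simp, fun n => ?_, fun i hi => ?_⟩
      · rcases lt_trichotomy n L with h | rfl | h
        · simpa [h.le, Nat.succ_le_of_lt h] using hy n
        · simpa [hL] using hde
        · simpa [h.not_ge, (h.trans n.lt_succ_self).not_ge] using hδ
      · obtain ⟨n, hn, hn'⟩ := hv i hi
        exact ⟨n, by lia, by simp [hn, hn']⟩

/-- If `f ^ κ = 1`, a sequence with jumps less than `δ` gives a pseudo-orbit of `f` by running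
once around the periodic orbit of `y n` before moving on to `y (n + 1)`. -/
lemma isPseudoOrbit_of_chain {M : Type*} [MetricSpace M] {f : Equiv.Perm M} {κ : ℕ} (hκ : 0 < κ)
    (hpow : f ^ κ = 1) {δ : ℝ} (hδ : 0 < δ) {y : ℤ → M}
    (hy : ∀ n, dist (y n) (y (n + 1)) < δ) :
    IsPseudoOrbit (⇑f) δ (fun i : ℤ => (f ^ i) (y (i / κ))) := by
  intro i
  have hstep : f ((f ^ i) (y (i / κ))) = (f ^ (i + 1)) (y (i / κ)) := by
    rw [add_comm, zpow_add, zpow_one, Equiv.Perm.mul_apply]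
  simp only [hstep]
  have hκ' : (0 : ℤ) < κ := by exact_mod_cast hκ
  by_cases hd : (κ : ℤ) ∣ i + 1
  · obtain ⟨m, hm⟩ := hd
    have h₁ : (i + 1) / (κ : ℤ) = m := by
      rw [hm]; exact Int.mul_ediv_cancel_left _ hκ'.ne'
    have h₂ : i / (κ : ℤ) = m - 1 := by
      rw [Int.ediv_eq_iff_of_pos hκ']
      constructor <;> nlinarith
    rw [h₁, h₂, hm, zpow_mul, zpow_natCast, hpow, one_zpow]
    simpa using hy (m - 1)
  · have h₁ : (i + 1) / (κ : ℤ) = i / κ := by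
      rw [Int.ediv_eq_iff_of_pos hκ']
      have hlt : i + 1 < i / κ * κ + κ := by
        refine lt_of_le_of_ne ?_ fun he => hd ⟨i / κ + 1, by rw [he]; ring⟩
        linarith [Int.lt_ediv_add_one_mul_self i hκ']
      constructor <;> linarith [Int.ediv_mul_le i hκ'.ne']
    rw [h₁, dist_self]
    exact hδ

/-- On a compact connected metric space with more than one point, a homeomorphism
with some positive iterate equal to the identity does not have the weak shadowing
property. -/
theorem not_weakShadowing_of_pow_eq_id {M : Type*} [MetricSpace M] [CompactSpace M]
    [ConnectedSpace M] (h : ∃ a b : M, a ≠ b) (f : M ≃ₜ M) (κ : ℕ) (hκ : 0 < κ)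
    (hpow : f.toEquiv ^ κ = Equiv.refl M) :
    ¬ WeakShadowing f.toEquiv := by
  intro hw
  have hpow' : f.toEquiv ^ κ = 1 := hpow
  have : Nontrivial M := ⟨h⟩
  have : Infinite M := PreconnectedSpace.infinite
  have : NeZero κ := ⟨hκ.ne'⟩
  let a : ℕ ↪ M := Infinite.natEmbedding M
  obtain ⟨ε, hεa, hε⟩ : ∃ ε : ℝ, (∀ i j : Fin (κ + 1), i ≠ j → 2 * ε < dist (a i) (a j)) ∧
      0 < ε := by
    have hev : ∀ᶠ ε : ℝ in nhdsWithin 0 (Set.Ioi 0),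
        ∀ i j : Fin (κ + 1), i ≠ j → 2 * ε < dist (a i) (a j) := by
      refine Filter.eventually_all.2 fun i => Filter.eventually_all.2 fun j => ?_
      by_cases hij : i = j
      · simp [hij]
      have hpos : 0 < dist (a i) (a j) :=
        dist_pos.2 fun he => hij (Fin.ext (a.injective he))
      filter_upwards [Ioo_mem_nhdsGT (half_pos hpos)] with ε hε _
      linarith [hε.2]
    exact (hev.and self_mem_nhdsWithin).exists
  obtain ⟨δ, hδ, hsh⟩ := hw ε hε
  obtain ⟨y, L, _, hy, hv⟩ := exists_chain_visiting hδ a (κ + 1) (a 0)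
  -- The chain is extended to negative indices as a constant.
  have hyZ : ∀ n : ℤ, dist (y n.toNat) (y (n + 1).toNat) < δ := by
    intro n
    rcases lt_or_ge n 0 with hn | hn
    · rw [Int.toNat_of_nonpos hn.le, Int.toNat_of_nonpos (by lia), dist_self]
      exact hδ
    · rw [show (n + 1).toNat = n.toNat + 1 by lia]
      exact hy _
  obtain ⟨p, hp⟩ := hsh _
    (isPseudoOrbit_of_chain (y := fun n : ℤ => y n.toNat) hκ hpow' hδ hyZ)
  have hclose : ∀ i : Fin (κ + 1), ∃ j : ℤ, dist (a i) ((f.toEquiv ^ j) p) < ε := by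
    intro i
    obtain ⟨n, -, hn⟩ := hv i i.2
    obtain ⟨j, hj⟩ := hp (κ * n)
    refine ⟨j, ?_⟩
    have hκ' : (κ : ℤ) ≠ 0 := by exact_mod_cast hκ.ne'
    rw [Int.mul_ediv_cancel_left _ hκ', zpow_mul, zpow_natCast _ κ, hpow', one_zpow] at hj
    simpa [hn] using hj
  choose j hj using hclose
  obtain ⟨u, v, huv, he⟩ := Fintype.exists_ne_map_eq_of_card_lt
    (fun i : Fin (κ + 1) => ((j i : ℤ) : ZMod κ)) (by simp [ZMod.card])
  have hsame : f.toEquiv ^ j u = f.toEquiv ^ j v := by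
    obtain ⟨m, hm⟩ := (ZMod.intCast_eq_intCast_iff_dvd_sub _ _ _).1 he
    rw [show j v = j u + κ * m by lia, zpow_add, zpow_mul, zpow_natCast, hpow', one_zpow,
      mul_one]
  have h₁ := hj u
  have h₂ := hj v
  rw [hsame] at h₁
  linarith [hεa u v huv, dist_triangle_right (a u) (a v) ((f.toEquiv ^ j v) p)]
end

section
/- Let M be a compact connected metric space with more than one point, let κ be a positive integer, and let f : M → M be a homeomorphism such that every point of M is periodic for f with period at most κ. Then f does not have the weak shadowing property. -/
theorem isPseudoOrbit_zpow {M : Type*} [MetricSpace M] (e : Equiv.Perm M) {δ : ℝ} (hδ : 0 < δ)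
    (p : M) : IsPseudoOrbit (⇑e) δ (fun i => (e ^ i) p) := by
  intro i
  have : e ((e ^ i) p) = (e ^ (i + 1)) p := by
    rw [add_comm, zpow_add, zpow_one, Equiv.Perm.mul_apply]
  simpa [this] using hδ

/-- Any two points of a connected space are joined by a `δ`-chain of `e` if `e` has finite order. -/
theorem transGen_chain {M : Type*} [MetricSpace M] [PreconnectedSpace M] (e : Equiv.Perm M)
    {N : ℕ} (hN : 0 < N) (heN : e ^ N = 1) {δ : ℝ} (hδ : 0 < δ) (x y : M) :
    Relation.TransGen (fun a b => dist (e a) b < δ) x y := by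
  set R : M → M → Prop := fun a b => dist (e a) b < δ with hR
  have hstep : ∀ a, R a (e a) := fun a => by simpa [hR] using hδ
  have hiter : ∀ (n : ℕ) (a : M), Relation.ReflTransGen R a ((e ^ n) a) := by
    intro n a
    induction n with
    | zero => exact Relation.ReflTransGen.refl
    | succ n ih =>
      rw [pow_succ', Equiv.Perm.mul_apply]
      exact ih.tail (hstep _)
  have hball : ∀ a b, dist a b < δ → Relation.TransGen R a b := by
    intro a b hab
    refine Relation.TransGen.tail' (hiter (N - 1) a) ?_
    have : e ((e ^ (N - 1)) a) = a := by
      rw [← Equiv.Perm.mul_apply, ← pow_succ', Nat.sub_add_cancel hN, heN, Equiv.Perm.one_apply]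
    simpa [hR, this] using hab
  have hclopen : IsClopen {z | Relation.TransGen R x z} := by
    constructor
    · rw [← isOpen_compl_iff, Metric.isOpen_iff]
      intro z hz
      refine ⟨δ, hδ, fun w hw hxw => hz ?_⟩
      exact Relation.TransGen.trans hxw (hball w z hw)
    · rw [Metric.isOpen_iff]
      intro z hz
      refine ⟨δ, hδ, fun w hw => ?_⟩
      exact Relation.TransGen.trans hz (hball z w (by simpa [dist_comm] using hw))
  have huniv := hclopen.eq_univ ⟨e x, Relation.TransGen.single (hstep x)⟩
  exact Set.eq_univ_iff_forall.1 huniv y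

/-- A pseudo-orbit may be cut at time `n` and continued along any chain starting at `x n`. -/
theorem exists_pseudoOrbit_extend {M : Type*} [MetricSpace M] (e : Equiv.Perm M) {δ : ℝ}
    (hδ : 0 < δ) {x : ℤ → M} (hx : IsPseudoOrbit (⇑e) δ x) (n : ℤ) {q : M}
    (hq : Relation.ReflTransGen (fun a b => dist (e a) b < δ) (x n) q) :
    ∃ x' : ℤ → M, IsPseudoOrbit (⇑e) δ x' ∧ (∀ i ≤ n, x' i = x i) ∧ ∃ m ≥ n, x' m = q := by
  induction hq with
  | refl => exact ⟨x, hx, fun _ _ => rfl, n, le_rfl, rfl⟩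
  | @tail b c _ hbc ih =>
    obtain ⟨x', hx', hagree, m, hm, rfl⟩ := ih
    -- Jump to `c` at time `m + 1` and follow the true orbit of `c` afterwards.
    refine ⟨fun i => if i ≤ m then x' i else (e ^ (i - (m + 1))) c, fun i => ?_, fun i hi => ?_,
      m + 1, by omega, by simp⟩
    · rcases lt_trichotomy i m with h | rfl | h
      · simpa [h.le, Int.add_one_le_iff.2 h] using hx' i
      · simpa using hbc
      · have h1 : ¬ i ≤ m := by omega
        have h2 : ¬ i + 1 ≤ m := by omega
        have h3 : i + 1 - (m + 1) = i - (m + 1) + 1 := by ring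
        simp only [h1, h2, if_false, h3]
        exact isPseudoOrbit_zpow e hδ c _
    · simp [hi.trans hm, hagree i hi]

/-- Some pseudo-orbit visits all points of a prescribed finite set, by induction on the set.
The bound `n` on the visiting times leaves room to append a further chain in the induction. -/
theorem exists_pseudoOrbit_through_s5 {M : Type*} [MetricSpace M] [ConnectedSpace M]
    (e : Equiv.Perm M) {N : ℕ} (hN : 0 < N) (heN : e ^ N = 1) {δ : ℝ} (hδ : 0 < δ)
    (s : Finset M) :
    ∃ x : ℤ → M, IsPseudoOrbit (⇑e) δ x ∧ ∃ n : ℤ, ∀ q ∈ s, ∃ i ≤ n, x i = q := by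
  classical
  induction s using Finset.induction_on with
  | empty =>
    obtain ⟨p⟩ : Nonempty M := inferInstance
    exact ⟨_, isPseudoOrbit_zpow e hδ p, 0, by simp⟩
  | insert a s _ ih =>
    obtain ⟨x, hx, n, hn⟩ := ih
    obtain ⟨x', hx', hagree, m, hm, hma⟩ :=
      exists_pseudoOrbit_extend e hδ hx n (transGen_chain e hN heN hδ (x n) a).to_reflTransGen
    refine ⟨x', hx', m, fun q hq => ?_⟩
    rcases Finset.mem_insert.1 hq with rfl | hq
    · exact ⟨m, le_rfl, hma⟩
    · obtain ⟨i, hi, rfl⟩ := hn q hq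
      exact ⟨i, hi.trans hm, hagree i hi⟩

/-- On a compact connected metric space with more than one point, a homeomorphism all
of whose points are periodic with period at most a fixed bound does not have the weak
shadowing property. -/
theorem not_weakShadowing_of_all_periodic {M : Type*} [MetricSpace M] [CompactSpace M]
    [ConnectedSpace M] (h : ∃ a b : M, a ≠ b) (f : M ≃ₜ M) (κ : ℕ) (hκ : 0 < κ)
    (hper : ∀ p : M, ∃ π : ℕ, 0 < π ∧ π ≤ κ ∧ (⇑f)^[π] p = p ∧
      ∀ m : ℕ, 0 < m → (⇑f)^[m] p = p → π ≤ m) :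
    ¬ WeakShadowing f.toEquiv := by
  classical
  obtain ⟨a, b, hab⟩ := h
  have : Nontrivial M := ⟨a, b, hab⟩
  have : Infinite M := PreconnectedSpace.infinite
  set e : Equiv.Perm M := f.toEquiv with he
  obtain ⟨N, hN, heN⟩ : ∃ N : ℕ, 0 < N ∧ e ^ N = 1 := by
    refine ⟨κ.factorial, κ.factorial_pos, Equiv.ext fun p => ?_⟩
    obtain ⟨π, hπ0, hπκ, hπ, -⟩ := hper p
    have hp : Function.IsPeriodicPt (⇑f) κ.factorial p :=
      Function.IsPeriodicPt.trans_dvd hπ (Nat.dvd_factorial hπ0 hπκ)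
    rw [← Equiv.Perm.iterate_eq_pow, Equiv.Perm.one_apply]
    exact hp
  obtain ⟨s, hs⟩ := Infinite.exists_subset_card_eq M (N + 1)
  have hsn : (s : Set M).Nontrivial := Finset.one_lt_card_iff_nontrivial.1 (by omega)
  have hη : 0 < (s : Set M).infsep := s.finite_toSet.infsep_pos_iff_nontrivial.2 hsn
  intro hw
  obtain ⟨δ, hδ, hsh⟩ := hw ((s : Set M).infsep / 2) (half_pos hη)
  obtain ⟨x, hx, n, hxs⟩ := exists_pseudoOrbit_through_s5 e hN heN hδ s
  obtain ⟨p, hp⟩ := hsh x hx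
  -- Since `e ^ N = 1`, the shadowing exponents may be taken in `{0, …, N - 1}`.
  have hclose : ∀ q ∈ s, ∃ k ∈ Finset.range N, dist q ((e ^ k) p) < (s : Set M).infsep / 2 := by
    intro q hq
    obtain ⟨i, -, rfl⟩ := hxs q hq
    obtain ⟨j, hj⟩ := hp i
    have hN' : (0 : ℤ) < N := by exact_mod_cast hN
    have h0 := Int.emod_nonneg j hN'.ne'
    have h1 := Int.emod_lt_of_pos j hN'
    refine ⟨(j % N).toNat, Finset.mem_range.2 (by omega), ?_⟩
    have hpow : e ^ (j % N).toNat = e ^ j := by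
      rw [← zpow_natCast, Int.toNat_of_nonneg h0]
      conv_rhs => rw [← Int.emod_add_mul_ediv j N, zpow_add, zpow_mul, zpow_natCast, heN,
        one_zpow, mul_one]
    rw [hpow]
    exact hj
  choose! k hk hkd using hclose
  obtain ⟨q, hq, r, hr, hqr, hkqr⟩ :=
    Finset.exists_ne_map_eq_of_card_lt_of_maps_to (by simp [hs]) hk
  have h1 := hkd q hq
  have h2 := hkd r hr
  rw [← hkqr] at h2
  have h3 : (s : Set M).infsep ≤ dist q r :=
    Set.infsep_le_dist_of_mem hq hr hqr
  have h4 := dist_triangle_right q r ((e ^ k q) p)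
  linarith
end
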